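/- arXiv:1001.0960 — 6 statements merged into one kernel-verified Lean document; each statement's English description precedes it below -/
import Mathlib

section
/- Suppose Assumptions A1 and A3 hold with slackness δ > 0, V > 0, all initial queue backlogs are zero, and a C(t)-approximate policy is run with C(t) ≤ C + Vε_V + Σ_l Z_l(t)ε_Z + Σ_k Q_k(t)ε_Q + Σ_m |H_m(t)|ε_H, where ε_Q < δ, ε_H < δ, and ε_Z + ε_H Σ_{m=1}^M β_{l,m} < δ for all l. Then for any positive integers T and R, with t_end = RT, the time averages over the first t_end slots satisfy: ȳ₀ + f(x̄) ≤ ((1−p)/R)Σ_{r=0}^{R−1} F_r^* + ε_V + p(y₀^max + f^max) + (B + C + D̃(T−1))/V + Σ_{m=1}^M ν_m VC₃/(θ RT), where p = max[ε_Z/(δ − (ε_H+θ)β_sum), ε_Q/δ, ε_H/(ε_H+θ)], D̃ = D + ½Σ_l z_l^diff ε_Z + ½Σ_k q_k^diff ε_Q + ½Σ_m h_m^diff ε_H, θ = min[δ − ε_Q, δ − ε_H, (δ − ε_Z − ε_H β_sum)/(1 + β_sum)] with β_sum = max_l Σ_m β_{l,m}, and C₃ = √(D₁ + D₂ + D₃)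 with D₁ = [(B+C)/V + (y₀^max − y₀^min) + (f^max − f^min) + ε_V]², D₂ = 2Dθ²/V², D₃ = (2 z_max θ/V)√D₁. -/
/-- The "drift-plus-penalty" expression `E_t(α,γ)` whose (approximate) per-slot
minimization defines the universal scheduling algorithm. -/
noncomputable def driftExpr {Act Ω : Type*} {K M L : ℕ}
    (ahat bhat : Fin K → Act → Ω → ℝ) (xhat : Fin M → Act → Ω → ℝ)
    (y0hat : Act → Ω → ℝ) (yhat : Fin L → Act → Ω → ℝ)
    (g : Fin L → (Fin M → ℝ) → ℝ) (f : (Fin M → ℝ) → ℝ) (V : ℝ)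
    (w : Ω) (Zv : Fin L → ℝ) (Qv : Fin K → ℝ) (Hv : Fin M → ℝ)
    (a : Act) (γ : Fin M → ℝ) : ℝ :=
  V * y0hat a w + V * f γ
    + ∑ l, Zv l * (yhat l a w + g l γ)
    + ∑ k, Qv k * (ahat k a w - bhat k a w)
    + ∑ m, Hv m * (γ m - xhat m a w)

/-- `F_r^*`: the infimum cost achievable over the `r`-th frame of size `T` by a
`T`-slot lookahead policy that satisfies all constraints over the frame. -/
noncomputable def FrStar {Act Ω : Type*} {K M L : ℕ} (ω : ℕ → Ω) (A : Ω → Set Act)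
    (ahat bhat : Fin K → Act → Ω → ℝ) (xhat : Fin M → Act → Ω → ℝ)
    (y0hat : Act → Ω → ℝ) (yhat : Fin L → Act → Ω → ℝ)
    (g : Fin L → (Fin M → ℝ) → ℝ) (f : (Fin M → ℝ) → ℝ)
    (X : Set (Fin M → ℝ)) (T r : ℕ) : ℝ :=
  sInf {c : ℝ | ∃ a : ℕ → Act,
    (∀ τ ∈ Finset.Ico (r * T) ((r + 1) * T), a τ ∈ A (ω τ)) ∧
    (∀ l, (∑ τ ∈ Finset.Ico (r * T) ((r + 1) * T), yhat l (a τ) (ω τ)) / T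
        + g l (fun m => (∑ τ ∈ Finset.Ico (r * T) ((r + 1) * T), xhat m (a τ) (ω τ)) / T)
        ≤ 0) ∧
    (fun m => (∑ τ ∈ Finset.Ico (r * T) ((r + 1) * T), xhat m (a τ) (ω τ)) / T) ∈ X ∧
    (∀ k, (∑ τ ∈ Finset.Ico (r * T) ((r + 1) * T),
        (ahat k (a τ) (ω τ) - bhat k (a τ) (ω τ))) / T ≤ 0) ∧
    c = (∑ τ ∈ Finset.Ico (r * T) ((r + 1) * T), y0hat (a τ) (ω τ)) / T
        + f (fun m => (∑ τ ∈ Finset.Ico (r * T) ((r + 1) * T), xhat m (a τ) (ω τ)) / T)}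

lemma aux_Z_abs (z u : ℝ) (hz : 0 ≤ z) : |max (z + u) 0 - z| ≤ |u| := by
  have h := abs_max_sub_max_le_abs (z + u) z 0
  rw [max_eq_left hz] at h
  simpa using h

lemma aux_Z_sq (z u : ℝ) : (max (z + u) 0) ^ 2 ≤ z ^ 2 + u ^ 2 + 2 * (z * u) := by
  rcases max_cases (z + u) 0 with ⟨h, _⟩ | ⟨h, _⟩ <;> rw [h] <;> nlinarith [sq_nonneg (z + u)]

lemma aux_Q_abs (q a b : ℝ) (hq : 0 ≤ q) (ha : 0 ≤ a) (hb : 0 ≤ b) :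
    |max (q - b) 0 + a - q| ≤ max b a := by
  have h1 := le_max_left b a
  have h2 := le_max_right b a
  rw [abs_le]
  rcases max_cases (q - b) 0 with ⟨h, _⟩ | ⟨h, _⟩ <;> rw [h] <;> constructor <;> linarith

lemma aux_Q_sq (q a b : ℝ) (hq : 0 ≤ q) (ha : 0 ≤ a) (hb : 0 ≤ b) :
    (max (q - b) 0 + a) ^ 2 ≤ q ^ 2 + (b ^ 2 + a ^ 2) + 2 * (q * (a - b)) := by
  rcases max_cases (q - b) 0 with ⟨h, h'⟩ | ⟨h, h'⟩ <;> rw [h]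
  · nlinarith [mul_nonneg ha hb]
  · nlinarith [mul_nonneg hq ha, sq_nonneg (q - b)]

lemma aux_drift (z : ℕ → ℝ) (c : ℝ) (h : ∀ t, |z (t + 1) - z t| ≤ c) (t j : ℕ) :
    |z (t + j) - z t| ≤ j * c := by
  induction j with
  | zero => simp
  | succ j ih =>
    have h1 := h (t + j)
    have h2 := abs_sub_le (z (t + (j + 1))) (z (t + j)) (z t)
    rw [← add_assoc] at *
    push_cast
    linarith

lemma aux_sumsq {n : ℕ} (v : Fin n → ℝ) : ∑ i, v i ^ 2 ≤ (∑ i, |v i|) ^ 2 := by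
  have := Finset.sum_sq_le_sq_sum_of_nonneg (s := Finset.univ) (f := fun i => |v i|)
    (fun i _ => abs_nonneg _)
  simpa using this

lemma aux_sum_id (T : ℕ) : ∑ j ∈ Finset.range T, (j : ℝ) = T * ((T : ℝ) - 1) / 2 := by
  induction T with
  | zero => simp
  | succ n ih => rw [Finset.sum_range_succ, ih]; push_cast; ring

lemma aux_prod (z z0 d c u : ℝ) (h : |z - z0| ≤ d * c) : z * u ≤ z0 * u + d * (c * |u|) := by
  have h1 : (z - z0) * u ≤ |z - z0| * |u| := by rw [← abs_mul]; exact le_abs_self _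
  have h2 := mul_le_mul_of_nonneg_right h (abs_nonneg u)
  linarith

lemma aux_sum_prod {n : ℕ} (z z0 c u : Fin n → ℝ) (d : ℝ) (h : ∀ i, |z i - z0 i| ≤ d * c i) :
    ∑ i, z i * u i ≤ ∑ i, z0 i * u i + d * ∑ i, c i * |u i| := by
  rw [Finset.mul_sum, ← Finset.sum_add_distrib]
  exact Finset.sum_le_sum fun i _ => aux_prod _ _ _ _ _ (h i)

/-- squared-norm growth of one group of queues -/
lemma aux_grow {n : ℕ} (v w e c : Fin n → ℝ) (zmax : ℝ) (hc : ∀ i, c i ≤ zmax)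
    (he : ∀ i, |w i - v i| ≤ e i) (hec : ∀ i, e i ≤ c i) :
    ∑ i, w i ^ 2 ≤ ∑ i, v i ^ 2 + ∑ i, c i * e i + 2 * zmax * ∑ i, |v i| := by
  rw [Finset.mul_sum, ← Finset.sum_add_distrib, ← Finset.sum_add_distrib]
  refine Finset.sum_le_sum fun i _ => ?_
  have h0 := abs_nonneg (w i - v i)
  have h1 : v i * (w i - v i) ≤ |v i| * |w i - v i| := by rw [← abs_mul]; exact le_abs_self _
  have h2 : |v i| * |w i - v i| ≤ |v i| * zmax :=
    mul_le_mul_of_nonneg_left (by linarith [he i, hec i, hc i]) (abs_nonneg _)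
  have h3 : (w i - v i) ^ 2 ≤ c i * e i := by
    rw [← sq_abs]
    nlinarith [he i, hec i]
  nlinarith

set_option maxHeartbeats 4000000 in
/-- Theorem 2(c): under Assumptions A1 and A3 (Slater slackness `δ`), a
`C(t)`-approximate policy started from empty queues satisfies, for any positive
integers `T` and `R` with `t_end = RT`,
`ȳ₀ + f(x̄) ≤ ((1−p)/R)Σ_r F_r^* + ε_V + p(y₀^max + f^max) + (B+C+D̃(T−1))/V
 + Σ_m ν_m VC₃/(θRT)`. -/
theorem stmt_9
    {Ω Act : Type*} (ω : ℕ → Ω) (A : Ω → Set Act) (hAne : ∀ w, (A w).Nonempty)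
    (K M L : ℕ) (hK : 0 < K) (hM : 0 < M) (hL : 0 < L)
    (ahat bhat : Fin K → Act → Ω → ℝ) (xhat : Fin M → Act → Ω → ℝ)
    (y0hat : Act → Ω → ℝ) (yhat : Fin L → Act → Ω → ℝ)
    (amax bmax : Fin K → ℝ) (xmin xmax : Fin M → ℝ)
    (y0min y0max : ℝ) (ymin ymax : Fin L → ℝ)
    -- Assumption A1 (boundedness)
    (hA1a : ∀ (w : Ω) (a' : Act), a' ∈ A w → ∀ k, 0 ≤ ahat k a' w ∧ ahat k a' w ≤ amax k)
    (hA1b : ∀ (w : Ω) (a' : Act), a' ∈ A w → ∀ k, 0 ≤ bhat k a' w ∧ bhat k a' w ≤ bmax k)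
    (hA1x : ∀ (w : Ω) (a' : Act), a' ∈ A w → ∀ m, xmin m ≤ xhat m a' w ∧ xhat m a' w ≤ xmax m)
    (hA1y0 : ∀ (w : Ω) (a' : Act), a' ∈ A w → y0min ≤ y0hat a' w ∧ y0hat a' w ≤ y0max)
    (hA1y : ∀ (w : Ω) (a' : Act), a' ∈ A w → ∀ l, ymin l ≤ yhat l a' w ∧ yhat l a' w ≤ ymax l)
    -- the convex set X and the cost functions f, g_l on the box
    (X : Set (Fin M → ℝ)) (hX : Convex ℝ X)
    (f : (Fin M → ℝ) → ℝ) (g : Fin L → (Fin M → ℝ) → ℝ)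
    (fmin fmax : ℝ) (gmin gmax : Fin L → ℝ) (β : Fin L → Fin M → ℝ)
    (hβ : ∀ l m, 0 ≤ β l m)
    (hfconv : ConvexOn ℝ {x : Fin M → ℝ | ∀ m, xmin m ≤ x m ∧ x m ≤ xmax m} f)
    (hfcont : ContinuousOn f {x : Fin M → ℝ | ∀ m, xmin m ≤ x m ∧ x m ≤ xmax m})
    (hfbd : ∀ x ∈ {x : Fin M → ℝ | ∀ m, xmin m ≤ x m ∧ x m ≤ xmax m},
      fmin ≤ f x ∧ f x ≤ fmax)
    (ν : Fin M → ℝ) (hν : ∀ m, 0 ≤ ν m)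
    (hflip : ∀ (x y : Fin M → ℝ),
      (∀ m, xmin m ≤ x m ∧ x m ≤ xmax m) →
      (∀ m, xmin m ≤ x m + y m ∧ x m + y m ≤ xmax m) →
      f (x + y) ≤ f x + ∑ m, ν m * |y m|)
    (hgconv : ∀ l, ConvexOn ℝ {x : Fin M → ℝ | ∀ m, xmin m ≤ x m ∧ x m ≤ xmax m} (g l))
    (hgcont : ∀ l, ContinuousOn (g l) {x : Fin M → ℝ | ∀ m, xmin m ≤ x m ∧ x m ≤ xmax m})
    (hgbd : ∀ l, ∀ x ∈ {x : Fin M → ℝ | ∀ m, xmin m ≤ x m ∧ x m ≤ xmax m},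
      gmin l ≤ g l x ∧ g l x ≤ gmax l)
    (hglip : ∀ (l : Fin L) (x y : Fin M → ℝ),
      (∀ m, xmin m ≤ x m ∧ x m ≤ xmax m) →
      (∀ m, xmin m ≤ x m + y m ∧ x m + y m ≤ xmax m) →
      g l (x + y) ≤ g l x + ∑ m, β l m * |y m|)
    -- Assumption A3 (Slater condition with slackness δ)
    (δ : ℝ) (hδ : 0 < δ)
    (hA3 : ∀ t, ∃ a' ∈ A (ω t),
      (∀ l, yhat l a' (ω t) + g l (fun m => xhat m a' (ω t)) ≤ -δ) ∧
      (∀ k, ahat k a' (ω t) ≤ bhat k a' (ω t) - δ) ∧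
      (∀ ε : Fin M → ℝ, (∀ m, |ε m| ≤ δ) →
        ((fun m => xhat m a' (ω t)) + ε) ∈ X) ∧
      (∀ m, xmin m + δ ≤ xhat m a' (ω t) ∧ xhat m a' (ω t) ≤ xmax m - δ))
    -- parameters and the constants B and D
    (V C B D : ℝ) (hV : 0 < V) (hC : 0 ≤ C)
    (hB : ∀ (t : ℕ) (a' : Act) (γ' : Fin M → ℝ), a' ∈ A (ω t) → γ' ∈ X →
      (∀ m, xmin m ≤ γ' m ∧ γ' m ≤ xmax m) →
      (1 / 2) * ∑ l, (yhat l a' (ω t) + g l γ') ^ 2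
        + (1 / 2) * ∑ k, ((bhat k a' (ω t)) ^ 2 + (ahat k a' (ω t)) ^ 2)
        + (1 / 2) * ∑ m, (γ' m - xhat m a' (ω t)) ^ 2 ≤ B)
    (hD : ∀ (t : ℕ) (a' : Act) (γ' : Fin M → ℝ), a' ∈ A (ω t) → γ' ∈ X →
      (∀ m, xmin m ≤ γ' m ∧ γ' m ≤ xmax m) →
      (1 / 2) * ∑ l, max (|ymax l + gmax l|) (|ymin l + gmin l|)
          * |yhat l a' (ω t) + g l γ'|
        + ∑ m, (xmax m - xmin m) * |xhat m a' (ω t) - γ' m|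
        + (1 / 2) * ∑ k, max (bmax k) (amax k)
          * max (bhat k a' (ω t)) (ahat k a' (ω t)) ≤ D)
    -- approximation error constants
    (εV εZ εQ εH : ℝ) (hεV : 0 ≤ εV) (hεZ : 0 ≤ εZ) (hεQ : 0 ≤ εQ) (hεH : 0 ≤ εH)
    (hεQδ : εQ < δ) (hεHδ : εH < δ)
    (hεZδ : ∀ l, εZ + εH * ∑ m, β l m < δ)
    -- the C(t)-approximate policy and the queues (initially empty)
    (α : ℕ → Act) (γ : ℕ → Fin M → ℝ)
    (hα : ∀ t, α t ∈ A (ω t)) (hγX : ∀ t, γ t ∈ X)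
    (hγbox : ∀ t m, xmin m ≤ γ t m ∧ γ t m ≤ xmax m)
    (Q : Fin K → ℕ → ℝ) (Z : Fin L → ℕ → ℝ) (H : Fin M → ℕ → ℝ)
    (hQ0 : ∀ k, Q k 0 = 0) (hZ0 : ∀ l, Z l 0 = 0) (hH0 : ∀ m, H m 0 = 0)
    (hQ : ∀ k t, Q k (t + 1) = max (Q k t - bhat k (α t) (ω t)) 0 + ahat k (α t) (ω t))
    (hZ : ∀ l t, Z l (t + 1) = max (Z l t + yhat l (α t) (ω t) + g l (γ t)) 0)
    (hH : ∀ m t, H m (t + 1) = H m t + γ t m - xhat m (α t) (ω t))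
    (Ct : ℕ → ℝ)
    (hCt : ∀ t, Ct t ≤ C + V * εV + (∑ l, Z l t * εZ) + (∑ k, Q k t * εQ)
        + (∑ m, |H m t| * εH))
    (hCapprox : ∀ (t : ℕ) (a' : Act) (γ' : Fin M → ℝ), a' ∈ A (ω t) → γ' ∈ X →
      (∀ m, xmin m ≤ γ' m ∧ γ' m ≤ xmax m) →
      driftExpr ahat bhat xhat y0hat yhat g f V (ω t)
          (fun l => Z l t) (fun k => Q k t) (fun m => H m t) (α t) (γ t)
        ≤ driftExpr ahat bhat xhat y0hat yhat g f V (ω t)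
          (fun l => Z l t) (fun k => Q k t) (fun m => H m t) a' γ' + Ct t)
    -- derived constants
    (βsum : ℝ) (hβsum : IsGreatest {x : ℝ | ∃ l, x = ∑ m, β l m} βsum)
    (zmax : ℝ)
    (hzmax : IsGreatest {x : ℝ |
        (∃ l, x = max (|ymax l + gmax l|) (|ymin l + gmin l|)) ∨
        (∃ k, x = max (bmax k) (amax k)) ∨
        (∃ m, x = xmax m - xmin m)} zmax)
    (θ : ℝ)
    (hθ : θ = min (δ - εQ) (min (δ - εH) ((δ - εZ - εH * βsum) / (1 + βsum))))
    (D₁ D₂ D₃ C₃ : ℝ)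
    (hD₁ : D₁ = ((B + C) / V + (y0max - y0min) + (fmax - fmin) + εV) ^ 2)
    (hD₂ : D₂ = 2 * D * θ ^ 2 / V ^ 2)
    (hD₃ : D₃ = 2 * zmax * θ / V * Real.sqrt D₁)
    (hC₃ : C₃ = Real.sqrt (D₁ + D₂ + D₃))
    (p Dtil : ℝ)
    (hp : p = max (εZ / (δ - (εH + θ) * βsum)) (max (εQ / δ) (εH / (εH + θ))))
    (hDtil : Dtil = D
        + (1 / 2) * ∑ l, max (|ymax l + gmax l|) (|ymin l + gmin l|) * εZ
        + (1 / 2) * ∑ k, max (bmax k) (amax k) * εQ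
        + (1 / 2) * ∑ m, (xmax m - xmin m) * εH)
    (T R : ℕ) (hT : 0 < T) (hR : 0 < R) :
    (∑ τ ∈ Finset.range (R * T), y0hat (α τ) (ω τ)) / (R * T)
        + f (fun m => (∑ τ ∈ Finset.range (R * T), xhat m (α τ) (ω τ)) / (R * T))
      ≤ (1 - p) / R * ∑ r ∈ Finset.range R,
            FrStar ω A ahat bhat xhat y0hat yhat g f X T r
        + εV + p * (y0max + fmax)
        + (B + C + Dtil * ((T : ℝ) - 1)) / V
        + ∑ m, ν m * V * C₃ / (θ * R * T) := by
  classical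
  -- basic constants
  obtain ⟨⟨l0, hl0⟩, hβub⟩ := hβsum
  have hβle : ∀ l, ∑ m, β l m ≤ βsum := fun l => hβub ⟨l, rfl⟩
  have hβ0 : 0 ≤ βsum := by rw [hl0]; exact Finset.sum_nonneg fun m _ => hβ l0 m
  have hθ1 : θ ≤ δ - εQ := by rw [hθ]; exact min_le_left _ _
  have hθ2 : θ ≤ δ - εH := by
    rw [hθ]; exact (min_le_right _ _).trans (min_le_left _ _)
  have hθ3 : θ * (1 + βsum) ≤ δ - εZ - εH * βsum := by
    rw [← le_div_iff₀ (by linarith), hθ]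
    exact (min_le_right _ _).trans (min_le_right _ _)
  have hθ0 : 0 < θ := by
    rw [hθ]
    refine lt_min (by linarith) (lt_min (by linarith) (div_pos ?_ (by linarith)))
    have := hεZδ l0
    rw [← hl0] at this
    linarith
  obtain ⟨s, hs⟩ : ∃ s, s = εH + θ := ⟨_, rfl⟩
  have hs0 : 0 < s := by linarith
  have hsδ : s ≤ δ := by linarith
  obtain ⟨κ, hκ⟩ : ∃ κ, κ = δ - s * βsum := ⟨_, rfl⟩
  have hκZ : εZ + θ ≤ κ := by rw [hκ, hs]; linarith
  have hκ0 : 0 < κ := by linarith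
  rw [← hs, ← hκ] at hp
  have hpZ : εZ ≤ p * κ := by
    rw [← div_le_iff₀ hκ0, hp]; exact le_max_left _ _
  have hpQ : εQ ≤ p * δ := by
    rw [← div_le_iff₀ hδ, hp]; exact (le_max_left _ _).trans (le_max_right _ _)
  have hpH : εH ≤ p * s := by
    rw [← div_le_iff₀ hs0, hp]; exact (le_max_right _ _).trans (le_max_right _ _)
  have hp0 : 0 ≤ p := by
    rw [hp]; exact (div_nonneg hεZ hκ0.le).trans (le_max_left _ _)
  have hp1 : p < 1 := by
    rw [hp]
    refine max_lt ?_ (max_lt ?_ ?_)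
    · rw [div_lt_one hκ0]; linarith
    · rw [div_lt_one hδ]; linarith
    · rw [div_lt_one hs0]; linarith
  -- Slater policy
  choose sl hslA hslg hslQ hslX hslbox using hA3
  have hslater : ∀ (t : ℕ) (Zv : Fin L → ℝ) (Qv : Fin K → ℝ) (Hv : Fin M → ℝ),
      (∀ l, 0 ≤ Zv l) → (∀ k, 0 ≤ Qv k) →
      ∃ γ' : Fin M → ℝ, γ' ∈ X ∧ (∀ m, xmin m ≤ γ' m ∧ γ' m ≤ xmax m) ∧
        driftExpr ahat bhat xhat y0hat yhat g f V (ω t) Zv Qv Hv (sl t) γ' ≤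
          V * (y0max + fmax) - (∑ l, Zv l) * κ - (∑ k, Qv k) * δ - (∑ m, |Hv m|) * s := by
    intro t Zv Qv Hv hZv hQv
    let e : Fin M → ℝ := fun m => if 0 ≤ Hv m then -s else s
    have he : ∀ m, |e m| = s := by
      intro m
      simp only [e]
      split_ifs
      · rw [abs_neg, abs_of_pos hs0]
      · rw [abs_of_pos hs0]
    have heH : ∀ m, Hv m * e m = - (|Hv m| * s) := by
      intro m
      simp only [e]
      split_ifs with h
      · rw [abs_of_nonneg h]; ring
      · rw [abs_of_neg (not_le.mp h)]; ring
    have hbox : ∀ m, xmin m ≤ xhat m (sl t) (ω t) + e m ∧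
        xhat m (sl t) (ω t) + e m ≤ xmax m := by
      intro m
      have h1 := hslbox t m
      have h2 := abs_le.mp (he m).le
      constructor <;> linarith [h1.1, h1.2, h2.1, h2.2]
    refine ⟨(fun m => xhat m (sl t) (ω t)) + e, hslX t e fun m => (he m).le.trans hsδ, hbox, ?_⟩
    have hx0 := hA1x (ω t) (sl t) (hslA t)
    have hg : ∀ l, yhat l (sl t) (ω t) + g l ((fun m => xhat m (sl t) (ω t)) + e) ≤ -κ := by
      intro l
      have h1 := hglip l (fun m => xhat m (sl t) (ω t)) e hx0 hbox
      have h2 := hslg t l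
      have h3 : ∑ m, β l m * |e m| = (∑ m, β l m) * s := by
        rw [Finset.sum_mul]; exact Finset.sum_congr rfl fun m _ => by rw [he m]
      have h4 := mul_le_mul_of_nonneg_right (hβle l) hs0.le
      rw [hκ]; linarith
    unfold driftExpr
    have e1 : y0hat (sl t) (ω t) ≤ y0max := (hA1y0 _ _ (hslA t)).2
    have e2 : f ((fun m => xhat m (sl t) (ω t)) + e) ≤ fmax := (hfbd _ hbox).2
    have e3 := mul_le_mul_of_nonneg_left (add_le_add e1 e2) hV.le
    have e4 : ∑ l, Zv l * (yhat l (sl t) (ω t) + g l ((fun m => xhat m (sl t) (ω t)) + e))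
        ≤ - ((∑ l, Zv l) * κ) := by
      rw [Finset.sum_mul, ← Finset.sum_neg_distrib]
      refine Finset.sum_le_sum fun l _ => ?_
      have := mul_le_mul_of_nonneg_left (hg l) (hZv l)
      linarith
    have e5 : ∑ k, Qv k * (ahat k (sl t) (ω t) - bhat k (sl t) (ω t))
        ≤ - ((∑ k, Qv k) * δ) := by
      rw [Finset.sum_mul, ← Finset.sum_neg_distrib]
      refine Finset.sum_le_sum fun k _ => ?_
      have := mul_le_mul_of_nonneg_left
        (show ahat k (sl t) (ω t) - bhat k (sl t) (ω t) ≤ -δ by linarith [hslQ t k]) (hQv k)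
      linarith
    have e6 : ∑ m, Hv m * (((fun m => xhat m (sl t) (ω t)) + e) m - xhat m (sl t) (ω t))
        = - ((∑ m, |Hv m|) * s) := by
      rw [Finset.sum_mul, ← Finset.sum_neg_distrib]
      refine Finset.sum_congr rfl fun m _ => ?_
      rw [← heH m]
      simp
    rw [e6]
    linarith
  -- positivity of queues
  have hZnn : ∀ l t, 0 ≤ Z l t := by
    intro l t
    cases t with
    | zero => rw [hZ0]
    | succ t => rw [hZ]; exact le_max_right _ _
  have hab := fun t k => hA1a _ _ (hα t) k
  have hbb := fun t k => hA1b _ _ (hα t) k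
  have hQnn : ∀ k t, 0 ≤ Q k t := by
    intro k t
    cases t with
    | zero => rw [hQ0]
    | succ t => rw [hQ]; exact add_nonneg (le_max_right _ _) (hab t k).1
  -- per-slot increments
  obtain ⟨zd, hzd⟩ : ∃ zd : Fin L → ℝ,
      ∀ l, zd l = max (|ymax l + gmax l|) (|ymin l + gmin l|) := ⟨_, fun _ => rfl⟩
  obtain ⟨qd, hqd⟩ : ∃ qd : Fin K → ℝ, ∀ k, qd k = max (bmax k) (amax k) := ⟨_, fun _ => rfl⟩
  obtain ⟨hd, hhd⟩ : ∃ hd : Fin M → ℝ, ∀ m, hd m = xmax m - xmin m := ⟨_, fun _ => rfl⟩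
  simp only [← hzd, ← hqd, ← hhd] at hD hzmax hDtil
  have hzm1 : ∀ l, zd l ≤ zmax := fun l => hzmax.2 (Or.inl ⟨l, rfl⟩)
  have hzm2 : ∀ k, qd k ≤ zmax := fun k => hzmax.2 (Or.inr (Or.inl ⟨k, rfl⟩))
  have hzm3 : ∀ m, hd m ≤ zmax := fun m => hzmax.2 (Or.inr (Or.inr ⟨m, rfl⟩))
  have hzd0 : ∀ l, 0 ≤ zd l := fun l => by
    rw [hzd]; exact (abs_nonneg _).trans (le_max_left _ _)
  have hqd0 : ∀ k, 0 ≤ qd k := fun k => by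
    rw [hqd]; exact ((hbb 0 k).1.trans (hbb 0 k).2).trans (le_max_left _ _)
  have hhd0 : ∀ m, 0 ≤ hd m := fun m => by
    rw [hhd]; linarith [(hγbox 0 m).1, (hγbox 0 m).2]
  have hzmax0 : 0 ≤ zmax := (hzd0 l0).trans (hzm1 l0)
  have hu : ∀ t l, |yhat l (α t) (ω t) + g l (γ t)| ≤ zd l := by
    intro t l
    have h1 := hA1y _ _ (hα t) l
    have h2 := hgbd l (γ t) (hγbox t)
    rw [hzd, max_comm]
    exact abs_le_max_abs_abs (add_le_add h1.1 h2.1) (add_le_add h1.2 h2.2)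
  have hxb := fun t m => hA1x _ _ (hα t) m
  have hZe : ∀ t l, |Z l (t + 1) - Z l t| ≤ |yhat l (α t) (ω t) + g l (γ t)| := by
    intro t l
    rw [hZ, add_assoc]
    exact aux_Z_abs _ _ (hZnn l t)
  have hQe : ∀ t k, |Q k (t + 1) - Q k t| ≤ max (bhat k (α t) (ω t)) (ahat k (α t) (ω t)) := by
    intro t k
    rw [hQ]
    exact aux_Q_abs _ _ _ (hQnn k t) (hab t k).1 (hbb t k).1
  have hQe' : ∀ t k, max (bhat k (α t) (ω t)) (ahat k (α t) (ω t)) ≤ qd k := by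
    intro t k
    rw [hqd]
    exact max_le_max (hbb t k).2 (hab t k).2
  have hHe : ∀ t m, |H m (t + 1) - H m t| ≤ |xhat m (α t) (ω t) - γ t m| := by
    intro t m
    rw [hH, abs_sub_comm (xhat m (α t) (ω t))]
    apply le_of_eq
    congr 1
    ring
  have hHe' : ∀ t m, |xhat m (α t) (ω t) - γ t m| ≤ hd m := by
    intro t m
    rw [hhd, abs_le]
    have h1 := hγbox t m
    have h2 := hxb t m
    constructor <;> linarith [h1.1, h1.2, h2.1, h2.2]
  -- Lyapunov drift
  obtain ⟨N, hN⟩ : ∃ N : ℕ → ℝ, ∀ t, N t = ∑ l, Z l t ^ 2 + ∑ k, Q k t ^ 2 + ∑ m, H m t ^ 2 :=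
    ⟨_, fun _ => rfl⟩
  have hN0 : N 0 = 0 := by rw [hN]; simp [hZ0, hQ0, hH0]
  have hNnn : ∀ t, 0 ≤ N t := by intro t; rw [hN]; positivity
  have hdrift : ∀ t, (N (t + 1) - N t) / 2
      + V * (y0hat (α t) (ω t) + f (γ t)) ≤ B +
        driftExpr ahat bhat xhat y0hat yhat g f V (ω t)
          (fun l => Z l t) (fun k => Q k t) (fun m => H m t) (α t) (γ t) := by
    intro t
    have hb := hB t (α t) (γ t) (hα t) (hγX t) (hγbox t)
    unfold driftExpr
    rw [hN, hN]
    have e1 : ∑ l, Z l (t + 1) ^ 2 ≤ ∑ l, Z l t ^ 2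
        + ∑ l, (yhat l (α t) (ω t) + g l (γ t)) ^ 2
        + 2 * ∑ l, Z l t * (yhat l (α t) (ω t) + g l (γ t)) := by
      rw [Finset.mul_sum, ← Finset.sum_add_distrib, ← Finset.sum_add_distrib]
      refine Finset.sum_le_sum fun l _ => ?_
      rw [hZ, add_assoc]
      exact aux_Z_sq _ _
    have e2 : ∑ k, Q k (t + 1) ^ 2 ≤ ∑ k, Q k t ^ 2
        + ∑ k, ((bhat k (α t) (ω t)) ^ 2 + (ahat k (α t) (ω t)) ^ 2)
        + 2 * ∑ k, Q k t * (ahat k (α t) (ω t) - bhat k (α t) (ω t)) := by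
      rw [Finset.mul_sum, ← Finset.sum_add_distrib, ← Finset.sum_add_distrib]
      refine Finset.sum_le_sum fun k _ => ?_
      rw [hQ]
      exact aux_Q_sq _ _ _ (hQnn k t) (hab t k).1 (hbb t k).1
    have e3 : ∑ m, H m (t + 1) ^ 2 = ∑ m, H m t ^ 2
        + ∑ m, (γ t m - xhat m (α t) (ω t)) ^ 2
        + 2 * ∑ m, H m t * (γ t m - xhat m (α t) (ω t)) := by
      rw [Finset.mul_sum, ← Finset.sum_add_distrib, ← Finset.sum_add_distrib]
      refine Finset.sum_congr rfl fun m _ => ?_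
      rw [hH]
      ring
    linarith
  have hstep : ∀ t a' γ', a' ∈ A (ω t) → γ' ∈ X →
      (∀ m, xmin m ≤ γ' m ∧ γ' m ≤ xmax m) →
      (N (t + 1) - N t) / 2 + V * (y0hat (α t) (ω t) + f (γ t)) ≤ B + (C + V * εV
        + (∑ l, Z l t) * εZ + (∑ k, Q k t) * εQ + (∑ m, |H m t|) * εH) +
        driftExpr ahat bhat xhat y0hat yhat g f V (ω t)
          (fun l => Z l t) (fun k => Q k t) (fun m => H m t) a' γ' := by
    intro t a' γ' h1 h2 h3
    have h4 := hCapprox t a' γ' h1 h2 h3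
    have h5 := hCt t
    rw [← Finset.sum_mul, ← Finset.sum_mul, ← Finset.sum_mul] at h5
    linarith [hdrift t]
  have hB0 : 0 ≤ B := by
    refine le_trans ?_ (hB 0 (α 0) (γ 0) (hα 0) (hγX 0) (hγbox 0))
    positivity
  -- queue bound
  obtain ⟨G, hG⟩ : ∃ G, G = (B + C) / V + (y0max - y0min) + (fmax - fmin) + εV := ⟨_, rfl⟩
  have hy0 := fun t => hA1y0 _ _ (hα t)
  have hf0 := fun t => hfbd _ (hγbox t)
  have hG0 : 0 ≤ G := by
    have h1 : 0 ≤ (B + C) / V := div_nonneg (by linarith) hV.le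
    rw [hG]
    linarith [(hy0 0).1, (hy0 0).2, (hf0 0).1, (hf0 0).2]
  have hVG : V * G = B + C + V * εV + V * (y0max + fmax) - V * (y0min + fmin) := by
    rw [hG]; field_simp; ring
  have hneg : ∀ t, (N (t + 1) - N t) / 2 ≤
      V * G - θ * (∑ l, |Z l t| + ∑ k, |Q k t| + ∑ m, |H m t|) := by
    intro t
    obtain ⟨γ', h1, h2, h3⟩ := hslater t (fun l => Z l t) (fun k => Q k t) (fun m => H m t)
      (fun l => hZnn l t) (fun k => hQnn k t)
    have h4 := hstep t (sl t) γ' (hslA t) h1 h2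
    have h5 := mul_le_mul_of_nonneg_left (add_le_add (hy0 t).1 (hf0 t).1) hV.le
    simp only [abs_of_nonneg (hZnn _ t), abs_of_nonneg (hQnn _ t)]
    have k1 : 0 ≤ ∑ l, Z l t := Finset.sum_nonneg fun l _ => hZnn l t
    have k2 : 0 ≤ ∑ k, Q k t := Finset.sum_nonneg fun l _ => hQnn l t
    have k3 := mul_le_mul_of_nonneg_left hκZ k1
    have k4 := mul_le_mul_of_nonneg_left (show εQ + θ ≤ δ by linarith) k2
    rw [hs] at h3
    linarith
  obtain ⟨W, hW⟩ : ∃ W, W = V * G / θ := ⟨_, rfl⟩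
  have hW0 : 0 ≤ W := by rw [hW]; positivity
  have hθW : θ * W = V * G := by rw [hW]; field_simp
  have hDt : ∀ t, ∑ l, zd l * |yhat l (α t) (ω t) + g l (γ t)|
      + ∑ m, hd m * |xhat m (α t) (ω t) - γ t m|
      + ∑ k, qd k * max (bhat k (α t) (ω t)) (ahat k (α t) (ω t)) ≤ 2 * D := by
    intro t
    have h := hD t (α t) (γ t) (hα t) (hγX t) (hγbox t)
    have h2 : 0 ≤ ∑ m, hd m * |xhat m (α t) (ω t) - γ t m| :=
      Finset.sum_nonneg fun m _ => mul_nonneg (hhd0 m) (abs_nonneg _)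
    linarith
  have hD0 : 0 ≤ D := by
    have h := hDt 0
    have h1 : 0 ≤ ∑ l, zd l * |yhat l (α 0) (ω 0) + g l (γ 0)| :=
      Finset.sum_nonneg fun m _ => mul_nonneg (hzd0 m) (abs_nonneg _)
    have h2 : 0 ≤ ∑ m, hd m * |xhat m (α 0) (ω 0) - γ 0 m| :=
      Finset.sum_nonneg fun m _ => mul_nonneg (hhd0 m) (abs_nonneg _)
    have h3 : 0 ≤ ∑ k, qd k * max (bhat k (α 0) (ω 0)) (ahat k (α 0) (ω 0)) :=
      Finset.sum_nonneg fun m _ => mul_nonneg (hqd0 m) ((abs_nonneg _).trans (hQe 0 m))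
    linarith
  have hNb : ∀ t, N t ≤ W ^ 2 + 2 * D + 2 * zmax * W := by
    intro t
    induction t with
    | zero => rw [hN0]; positivity
    | succ t ih =>
      have h1 := hneg t
      obtain ⟨S, hS⟩ : ∃ S, S = ∑ l, |Z l t| + ∑ k, |Q k t| + ∑ m, |H m t| := ⟨_, rfl⟩
      rw [← hS, ← hθW] at h1
      rcases le_or_gt W S with h | h
      · have := mul_le_mul_of_nonneg_left h hθ0.le
        linarith
      · have g1 := aux_grow (fun l => Z l t) (fun l => Z l (t + 1))
          (fun l => |yhat l (α t) (ω t) + g l (γ t)|) zd zmax hzm1 (hZe t) (hu t)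
        have g2 := aux_grow (fun k => Q k t) (fun k => Q k (t + 1)) _ qd zmax hzm2 (hQe t) (hQe' t)
        have g3 := aux_grow (fun m => H m t) (fun m => H m (t + 1)) _ hd zmax hzm3 (hHe t) (hHe' t)
        have q1 := aux_sumsq (fun l => Z l t)
        have q2 := aux_sumsq (fun l => Q l t)
        have q3 := aux_sumsq (fun l => H l t)
        have d := hDt t
        have p1 : 0 ≤ ∑ l, |Z l t| := Finset.sum_nonneg fun _ _ => abs_nonneg _
        have p2 : 0 ≤ ∑ l, |Q l t| := Finset.sum_nonneg fun _ _ => abs_nonneg _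
        have p3 : 0 ≤ ∑ l, |H l t| := Finset.sum_nonneg fun _ _ => abs_nonneg _
        have hS0 : 0 ≤ S := by rw [hS]; positivity
        have n1 : N t ≤ S ^ 2 := by
          rw [hN, hS]
          nlinarith [mul_nonneg p1 p2, mul_nonneg p1 p3, mul_nonneg p2 p3]
        have n2 : S ^ 2 ≤ W ^ 2 := by nlinarith
        have n3 : zmax * S ≤ zmax * W := mul_le_mul_of_nonneg_left h.le hzmax0
        rw [hS] at n3
        have n4 := hN t
        rw [hN (t + 1)]
        linarith
  have hsqD1 : Real.sqrt D₁ = G := by rw [hD₁, ← hG, Real.sqrt_sq hG0]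
  have hHb : ∀ t m, |H m t| ≤ V * C₃ / θ := by
    intro t m
    have hC30 : 0 ≤ C₃ := by rw [hC₃]; exact Real.sqrt_nonneg _
    have hc : C₃ ^ 2 = G ^ 2 + 2 * D * θ ^ 2 / V ^ 2 + 2 * zmax * θ / V * G := by
      rw [hC₃, Real.sq_sqrt, hD₂, hD₃, hsqD1, hD₁, ← hG]
      rw [hD₂, hD₃, hsqD1, hD₁, ← hG]
      positivity
    have hb : (V * C₃ / θ) ^ 2 = W ^ 2 + 2 * D + 2 * zmax * W := by
      rw [div_pow, mul_pow, hc, hW]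
      field_simp
    refine abs_le_of_sq_le_sq ?_ (by positivity)
    rw [hb]
    refine le_trans ?_ (hNb t)
    rw [hN]
    have h1 : H m t ^ 2 ≤ ∑ m, H m t ^ 2 :=
      Finset.single_le_sum (f := fun m => H m t ^ 2) (fun _ _ => sq_nonneg _) (Finset.mem_univ m)
    have h2 : 0 ≤ ∑ l, Z l t ^ 2 := by positivity
    have h3 : 0 ≤ ∑ l, Q l t ^ 2 := by positivity
    linarith
  -- frame analysis
  have hZdr : ∀ t j l, |Z l (t + j) - Z l t| ≤ j * zd l := fun t j l =>
    aux_drift (Z l) _ (fun t => (hZe t l).trans (hu t l)) t j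
  have hQdr : ∀ t j l, |Q l (t + j) - Q l t| ≤ j * qd l := fun t j l =>
    aux_drift (Q l) _ (fun t => (hQe t l).trans (hQe' t l)) t j
  have hHdr : ∀ t j l, |H l (t + j) - H l t| ≤ j * hd l := fun t j l =>
    aux_drift (H l) _ (fun t => (hHe t l).trans (hHe' t l)) t j
  have hEdr : ∀ (t j : ℕ) a' γ', a' ∈ A (ω (t + j)) → γ' ∈ X →
      (∀ m, xmin m ≤ γ' m ∧ γ' m ≤ xmax m) →
      driftExpr ahat bhat xhat y0hat yhat g f V (ω (t + j))
        (fun l => Z l (t + j)) (fun k => Q k (t + j)) (fun m => H m (t + j)) a' γ' ≤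
      driftExpr ahat bhat xhat y0hat yhat g f V (ω (t + j))
        (fun l => Z l t) (fun k => Q k t) (fun m => H m t) a' γ' + j * (2 * D) := by
    intro t j a' γ' h1 h2 h3
    have d := hD (t + j) a' γ' h1 h2 h3
    unfold driftExpr
    have e1 := aux_sum_prod (fun l => Z l (t + j)) (fun l => Z l t) zd
      (fun l => yhat l a' (ω (t + j)) + g l γ') j (hZdr t j)
    have e2 := aux_sum_prod (fun l => Q l (t + j)) (fun l => Q l t) qd
      (fun k => ahat k a' (ω (t + j)) - bhat k a' (ω (t + j))) j (hQdr t j)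
    have e3 := aux_sum_prod (fun l => H l (t + j)) (fun l => H l t) hd
      (fun m => γ' m - xhat m a' (ω (t + j))) j (hHdr t j)
    have e4 : ∑ k, qd k * |ahat k a' (ω (t + j)) - bhat k a' (ω (t + j))| ≤
        ∑ k, qd k * max (bhat k a' (ω (t + j))) (ahat k a' (ω (t + j))) := by
      refine Finset.sum_le_sum fun k _ => mul_le_mul_of_nonneg_left ?_ (hqd0 k)
      have k1 := hA1a _ _ h1 k
      have k2 := hA1b _ _ h1 k
      rw [abs_le]
      constructor
      · linarith [k1.1, le_max_left (bhat k a' (ω (t + j))) (ahat k a' (ω (t + j)))]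
      · linarith [k2.1, le_max_right (bhat k a' (ω (t + j))) (ahat k a' (ω (t + j)))]
    have e5 : ∑ m, hd m * |γ' m - xhat m a' (ω (t + j))| =
        ∑ m, hd m * |xhat m a' (ω (t + j)) - γ' m| :=
      Finset.sum_congr rfl fun m _ => by rw [abs_sub_comm]
    have e6 : 0 ≤ ∑ m, hd m * |xhat m a' (ω (t + j)) - γ' m| :=
      Finset.sum_nonneg fun m _ => mul_nonneg (hhd0 m) (abs_nonneg _)
    rw [e5] at e3
    have e7 : (j : ℝ) * (∑ l, zd l * |yhat l a' (ω (t + j)) + g l γ'|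
        + ∑ k, qd k * |ahat k a' (ω (t + j)) - bhat k a' (ω (t + j))|
        + ∑ m, hd m * |xhat m a' (ω (t + j)) - γ' m|) ≤ j * (2 * D) :=
      mul_le_mul_of_nonneg_left (by linarith) (Nat.cast_nonneg j)
    linarith
  obtain ⟨P, hP⟩ : ∃ P : ℕ → ℝ, ∀ t, P t = y0hat (α t) (ω t) + f (γ t) := ⟨_, fun _ => rfl⟩
  have hTpos : (0 : ℝ) < T := Nat.cast_pos.mpr hT
  have hRpos : (0 : ℝ) < R := Nat.cast_pos.mpr hR
  -- one-slot frame inequality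
  have hslot : ∀ (t j : ℕ) a' γ', a' ∈ A (ω (t + j)) → γ' ∈ X →
      (∀ m, xmin m ≤ γ' m ∧ γ' m ≤ xmax m) →
      (N (t + j + 1) - N (t + j)) / 2 + V * P (t + j) ≤
        B + C + V * εV + j * (2 * Dtil) + p * (V * (y0max + fmax))
        + (1 - p) * driftExpr ahat bhat xhat y0hat yhat g f V (ω (t + j))
        (fun l => Z l t) (fun k => Q k t) (fun m => H m t) a' γ' := by
    intro t j a' γ' h1 h2 h3
    obtain ⟨γs, s1, s2, s3⟩ := hslater (t + j) (fun l => Z l t) (fun k => Q k t)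
      (fun m => H m t) (fun l => hZnn l t) (fun k => hQnn k t)
    have u1 := (hstep (t + j) a' γ' h1 h2 h3).trans
      (add_le_add_right (hEdr t j a' γ' h1 h2 h3) _)
    have u2 := (hstep (t + j) (sl (t + j)) γs (hslA _) s1 s2).trans
      (add_le_add_right ((hEdr t j (sl (t + j)) γs (hslA _) s1 s2).trans
        (add_le_add_left s3 _)) _)
    rw [← hP] at u1 u2
    have v1 := mul_le_mul_of_nonneg_left u1 (show 0 ≤ 1 - p by linarith)
    have v2 := mul_le_mul_of_nonneg_left u2 hp0
    have w1 : ∑ l, Z l (t + j) ≤ ∑ l, Z l t + j * ∑ l, zd l := by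
      rw [Finset.mul_sum, ← Finset.sum_add_distrib]
      exact Finset.sum_le_sum fun l _ => by linarith [(abs_le.mp (hZdr t j l)).2]
    have w2 : ∑ l, Q l (t + j) ≤ ∑ l, Q l t + j * ∑ l, qd l := by
      rw [Finset.mul_sum, ← Finset.sum_add_distrib]
      exact Finset.sum_le_sum fun l _ => by linarith [(abs_le.mp (hQdr t j l)).2]
    have w3 : ∑ l, |H l (t + j)| ≤ ∑ l, |H l t| + j * ∑ l, hd l := by
      rw [Finset.mul_sum, ← Finset.sum_add_distrib]
      exact Finset.sum_le_sum fun l _ => by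
        linarith [hHdr t j l, abs_sub_abs_le_abs_sub (H l (t + j)) (H l t)]
    have x1 := mul_le_mul_of_nonneg_right w1 hεZ
    have x2 := mul_le_mul_of_nonneg_right w2 hεQ
    have x3 := mul_le_mul_of_nonneg_right w3 hεH
    have k1 : 0 ≤ ∑ l, Z l t := Finset.sum_nonneg fun l _ => hZnn l t
    have k2 : 0 ≤ ∑ k, Q k t := Finset.sum_nonneg fun l _ => hQnn l t
    have k3 : 0 ≤ ∑ k, |H k t| := Finset.sum_nonneg fun l _ => abs_nonneg _
    have y1 := mul_le_mul_of_nonneg_left hpZ k1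
    have y2 := mul_le_mul_of_nonneg_left hpQ k2
    have y3 := mul_le_mul_of_nonneg_left hpH k3
    have hDt2 : (j : ℝ) * (2 * Dtil) = j * (2 * D) + j * (∑ l, zd l) * εZ
        + j * (∑ l, qd l) * εQ + j * (∑ l, hd l) * εH := by
      rw [hDtil, ← Finset.sum_mul, ← Finset.sum_mul, ← Finset.sum_mul]
      ring
    rw [hDt2]
    linarith
  have hframe : ∀ r : ℕ, (N ((r + 1) * T) - N (r * T)) / 2
      + V * ∑ j ∈ Finset.range T, P (r * T + j) ≤
      T * (B + C + V * εV + p * (V * (y0max + fmax))) + T * ((T : ℝ) - 1) * Dtil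
      + (1 - p) * (V * (T * FrStar ω A ahat bhat xhat y0hat yhat g f X T r)) := by
    intro r
    have hlen : (r + 1) * T - r * T = T := by
      rw [add_mul, one_mul, Nat.add_sub_cancel_left]
    have hpp : 0 < (1 - p) * V * T := mul_pos (mul_pos (by linarith) hV) hTpos
    have hIco : ∀ F : ℕ → ℝ, ∑ τ ∈ Finset.Ico (r * T) ((r + 1) * T), F τ
        = ∑ j ∈ Finset.range T, F (r * T + j) := by
      intro F
      rw [Finset.sum_Ico_eq_sum_range, hlen]
    have hmem : ∀ j ∈ Finset.range T, r * T + j ∈ Finset.Ico (r * T) ((r + 1) * T) := by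
      intro j hj
      rw [Finset.mem_range] at hj
      rw [Finset.mem_Ico, add_mul]
      omega
    -- averages
    have havg : ∀ a : ℕ → Act, (∀ τ ∈ Finset.Ico (r * T) ((r + 1) * T), a τ ∈ A (ω τ)) →
        ∀ m, xmin m ≤ (∑ τ ∈ Finset.Ico (r * T) ((r + 1) * T), xhat m (a τ) (ω τ)) / T ∧
          (∑ τ ∈ Finset.Ico (r * T) ((r + 1) * T), xhat m (a τ) (ω τ)) / T ≤ xmax m := by
      intro a ha m
      rw [hIco, le_div_iff₀ hTpos, div_le_iff₀ hTpos]
      have c1 := Finset.card_nsmul_le_sum (Finset.range T)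
        (fun j => xhat m (a (r * T + j)) (ω (r * T + j))) (xmin m)
        (fun j hj => (hA1x _ _ (ha _ (hmem j hj)) m).1)
      have c2 := Finset.sum_le_card_nsmul (Finset.range T)
        (fun j => xhat m (a (r * T + j)) (ω (r * T + j))) (xmax m)
        (fun j hj => (hA1x _ _ (ha _ (hmem j hj)) m).2)
      simp only [Finset.card_range, nsmul_eq_mul] at c1 c2
      constructor <;> linarith
    have htel : ∑ j ∈ Finset.range T, (N (r * T + j + 1) - N (r * T + j))
        = N ((r + 1) * T) - N (r * T) := by
      have := Finset.sum_range_sub (fun j => N (r * T + j)) T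
      simp only [add_zero] at this
      rw [add_mul, one_mul]
      exact this
    have key : ((N ((r + 1) * T) - N (r * T)) / 2
      + V * ∑ j ∈ Finset.range T, P (r * T + j) -
      (T * (B + C + V * εV + p * (V * (y0max + fmax))) + T * ((T : ℝ) - 1) * Dtil))
        / ((1 - p) * V * T) ≤ FrStar ω A ahat bhat xhat y0hat yhat g f X T r := by
      unfold FrStar
      apply le_csInf
      · -- nonempty
        refine ⟨_, sl, fun τ _ => hslA τ, ?_, ?_, ?_, rfl⟩
        · intro l
          have hj := (hgconv l).map_sum_le (t := Finset.range T) (w := fun _ => (1 : ℝ) / T)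
            (p := fun j m => xhat m (sl (r * T + j)) (ω (r * T + j)))
            (fun _ _ => by positivity) (by simp [hTpos.ne'])
            (fun j _ => hA1x _ _ (hslA _))
          have heq : (∑ j ∈ Finset.range T, ((1 : ℝ) / T) •
              (fun m => xhat m (sl (r * T + j)) (ω (r * T + j)))) =
              (fun m => (∑ τ ∈ Finset.Ico (r * T) ((r + 1) * T), xhat m (sl τ) (ω τ)) / T) := by
            ext m
            rw [hIco, Finset.sum_div]
            simp [Finset.sum_apply, div_eq_inv_mul]
          rw [heq] at hj
          refine (add_le_add_right hj _).trans ?_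
          rw [hIco, Finset.sum_div, ← Finset.sum_add_distrib]
          refine Finset.sum_nonpos fun j _ => ?_
          have h1 := hslg (r * T + j) l
          rw [smul_eq_mul, div_eq_inv_mul, one_div, ← mul_add]
          exact mul_nonpos_of_nonneg_of_nonpos (by positivity) (by linarith)
        · have hj := hX.sum_mem (t := Finset.range T) (w := fun _ => (1 : ℝ) / T)
            (z := fun j m => xhat m (sl (r * T + j)) (ω (r * T + j)))
            (fun _ _ => by positivity) (by simp [hTpos.ne'])
            (fun j _ => by
              have := hslX (r * T + j) 0 (fun m => by simpa using hδ.le)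
              simpa using this)
          convert hj using 1
          ext m
          rw [hIco, Finset.sum_div]
          simp [Finset.sum_apply, div_eq_inv_mul]
        · intro k
          apply div_nonpos_of_nonpos_of_nonneg _ hTpos.le
          exact Finset.sum_nonpos fun τ _ => by linarith [hslQ τ k]
      · rintro c ⟨a, ha, hg, hx, hq, rfl⟩
        rw [div_le_iff₀ hpp]
        have hbx := havg a ha
        obtain ⟨γs, hγs⟩ : ∃ γs : Fin M → ℝ, γs = fun m =>
          (∑ τ ∈ Finset.Ico (r * T) ((r + 1) * T), xhat m (a τ) (ω τ)) / T := ⟨_, rfl⟩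
        have hγm : ∀ m, ∑ j ∈ Finset.range T, xhat m (a (r * T + j)) (ω (r * T + j))
            = T * γs m := by
          intro m
          rw [hγs, ← hIco (fun τ => xhat m (a τ) (ω τ))]
          field_simp
        rw [← hγs] at hx
        rw [← hγs]
        have hbx' : ∀ m, xmin m ≤ γs m ∧ γs m ≤ xmax m := by rw [hγs]; exact hbx
        have hsum := Finset.sum_le_sum fun j (hj : j ∈ Finset.range T) =>
          hslot (r * T) j (a (r * T + j)) γs (ha _ (hmem j hj)) hx hbx'
        have hE : ∑ j ∈ Finset.range T,
            driftExpr ahat bhat xhat y0hat yhat g f V (ω (r * T + j))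
            (fun l => Z l (r * T)) (fun k => Q k (r * T)) (fun m => H m (r * T))
              (a (r * T + j)) γs ≤ V * ∑ j ∈ Finset.range T, y0hat (a (r * T + j)) (ω (r * T + j))
              + V * (T * f γs) := by
          unfold driftExpr
          simp only [Finset.sum_add_distrib]
          rw [Finset.sum_comm (t := (Finset.univ : Finset (Fin L))),
            Finset.sum_comm (t := (Finset.univ : Finset (Fin K))),
            Finset.sum_comm (t := (Finset.univ : Finset (Fin M)))]
          simp only [← Finset.mul_sum]
          have z1 : ∑ l, Z l (r * T) * ∑ j ∈ Finset.range T,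
              (yhat l (a (r * T + j)) (ω (r * T + j)) + g l γs) ≤ 0 := by
            refine Finset.sum_nonpos fun l _ =>
              mul_nonpos_of_nonneg_of_nonpos (hZnn l _) ?_
            have := hg l
            rw [← hγs, hIco, div_add' _ _ _ hTpos.ne', div_le_iff₀ hTpos] at this
            rw [Finset.sum_add_distrib]
            simp only [Finset.sum_const, Finset.card_range, nsmul_eq_mul]
            linarith
          have z2 : ∑ k, Q k (r * T) * ∑ j ∈ Finset.range T,
              (ahat k (a (r * T + j)) (ω (r * T + j))
                - bhat k (a (r * T + j)) (ω (r * T + j))) ≤ 0 := by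
            refine Finset.sum_nonpos fun k _ =>
              mul_nonpos_of_nonneg_of_nonpos (hQnn k _) ?_
            have := hq k
            rw [hIco, div_le_iff₀ hTpos] at this
            linarith
          have z3 : ∑ m, H m (r * T) * ∑ j ∈ Finset.range T,
              (γs m - xhat m (a (r * T + j)) (ω (r * T + j))) = 0 := by
            refine Finset.sum_eq_zero fun m _ => ?_
            rw [Finset.sum_sub_distrib, hγm]
            simp
          rw [z3]
          simp only [Finset.sum_const, Finset.card_range, nsmul_eq_mul]
          linarith
        have hE' := mul_le_mul_of_nonneg_left hE (show 0 ≤ 1 - p by linarith)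
        simp only [Finset.sum_add_distrib, ← Finset.mul_sum, ← Finset.sum_mul, ← Finset.sum_div,
          Finset.sum_const, Finset.card_range, nsmul_eq_mul, aux_sum_id] at hsum
        rw [htel] at hsum
        rw [hIco]
        have hfin : (∑ j ∈ Finset.range T, y0hat (a (r * T + j)) (ω (r * T + j))) / T * T
          = ∑ j ∈ Finset.range T, y0hat (a (r * T + j)) (ω (r * T + j)) := by field_simp
        have hfin2 : ((∑ j ∈ Finset.range T, y0hat (a (r * T + j)) (ω (r * T + j))) / T + f γs)
            * ((1 - p) * V * T) = (1 - p) * (V * ∑ j ∈ Finset.range T,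
              y0hat (a (r * T + j)) (ω (r * T + j)) + V * (T * f γs)) := by
          rw [← hfin]; field_simp
        rw [hfin2]
        linarith
    rw [div_le_iff₀ hpp] at key
    linarith
  -- sum over frames
  have hall : ∀ R' : ℕ, N (R' * T) / 2 + V * ∑ t ∈ Finset.range (R' * T), P t ≤
      R' * (T * (B + C + V * εV + p * (V * (y0max + fmax))) + T * ((T : ℝ) - 1) * Dtil)
      + (1 - p) * (V * (T * ∑ r ∈ Finset.range R',
        FrStar ω A ahat bhat xhat y0hat yhat g f X T r)) := by
    intro R'
    induction R' with
    | zero => simp [hN0]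
    | succ r ih =>
      have h := hframe r
      rw [Finset.sum_range_succ]
      rw [add_mul, one_mul] at h
      rw [add_mul, one_mul, Finset.sum_range_add]
      push_cast
      linarith
  have hmain := hall R
  have hRT : (0 : ℝ) < R * T := mul_pos hRpos hTpos
  have havgP : (∑ t ∈ Finset.range (R * T), P t) / (R * T) ≤
      (1 - p) / R * ∑ r ∈ Finset.range R, FrStar ω A ahat bhat xhat y0hat yhat g f X T r
        + εV + p * (y0max + fmax) + (B + C + Dtil * ((T : ℝ) - 1)) / V := by
    rw [div_le_iff₀ hRT]
    have h1 : V * ∑ t ∈ Finset.range (R * T), P t ≤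
      R * (T * (B + C + V * εV + p * (V * (y0max + fmax))) + T * ((T : ℝ) - 1) * Dtil)
      + (1 - p) * (V * (T * ∑ r ∈ Finset.range R,
        FrStar ω A ahat bhat xhat y0hat yhat g f X T r)) := by
      linarith [hNnn (R * T)]
    refine le_of_mul_le_mul_left (h1.trans (le_of_eq ?_)) hV
    field_simp
    ring
  -- Jensen and Lipschitz
  obtain ⟨γb, hγb⟩ : ∃ γb : Fin M → ℝ, γb = fun m =>
    (∑ t ∈ Finset.range (R * T), γ t m) / (R * T) := ⟨_, rfl⟩
  obtain ⟨xb, hxbd⟩ : ∃ xb : Fin M → ℝ, xb = fun m =>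
    (∑ t ∈ Finset.range (R * T), xhat m (α t) (ω t)) / (R * T) := ⟨_, rfl⟩
  have hboxavg : ∀ (v : ℕ → Fin M → ℝ), (∀ t m, xmin m ≤ v t m ∧ v t m ≤ xmax m) → ∀ m,
      xmin m ≤ (∑ t ∈ Finset.range (R * T), v t m) / (R * T) ∧
      (∑ t ∈ Finset.range (R * T), v t m) / (R * T) ≤ xmax m := by
    intro v hv m
    rw [le_div_iff₀ hRT, div_le_iff₀ hRT]
    have c1 := Finset.card_nsmul_le_sum (Finset.range (R * T))
      (fun j => v j m) (xmin m) (fun j _ => (hv j m).1)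
    have c2 := Finset.sum_le_card_nsmul (Finset.range (R * T))
      (fun j => v j m) (xmax m) (fun j _ => (hv j m).2)
    simp only [Finset.card_range, nsmul_eq_mul, Nat.cast_mul] at c1 c2
    constructor <;> linarith
  have hγbbox : ∀ m, xmin m ≤ γb m ∧ γb m ≤ xmax m := by
    rw [hγb]; exact hboxavg γ hγbox
  have hxbbox : ∀ m, xmin m ≤ xb m ∧ xb m ≤ xmax m := by
    rw [hxbd]; exact hboxavg (fun t m => xhat m (α t) (ω t)) hxb
  have hJ : f γb ≤ (∑ t ∈ Finset.range (R * T), f (γ t)) / (R * T) := by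
    have hj := hfconv.map_sum_le (t := Finset.range (R * T))
      (w := fun _ => (1 : ℝ) / (R * T)) (p := γ)
      (fun _ _ => by positivity) (by simp; field_simp) (fun j _ => hγbox j)
    have heq : (∑ j ∈ Finset.range (R * T), ((1 : ℝ) / (R * T)) • γ j) = γb := by
      ext m
      simp only [hγb, Finset.sum_div]
      simp only [Finset.sum_apply, Pi.smul_apply, smul_eq_mul]
      exact Finset.sum_congr rfl fun j _ => by ring
    rw [heq] at hj
    refine hj.trans (le_of_eq ?_)
    rw [Finset.sum_div]
    exact Finset.sum_congr rfl fun j _ => by rw [smul_eq_mul]; ring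
  have hHsum : ∀ t m, H m t = ∑ j ∈ Finset.range t, γ j m
      - ∑ j ∈ Finset.range t, xhat m (α j) (ω j) := by
    intro t m
    induction t with
    | zero => simp [hH0]
    | succ t ih => rw [hH, Finset.sum_range_succ, Finset.sum_range_succ, ih]; ring
  have hdiff : ∀ m, |(xb - γb) m| ≤ V * C₃ / (θ * R * T) := by
    intro m
    have h1 : (xb - γb) m = - (H m (R * T) / (R * T)) := by
      rw [Pi.sub_apply, hxbd, hγb, hHsum]
      ring
    rw [h1, abs_neg, abs_div, abs_of_pos hRT, div_le_iff₀ hRT]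
    refine (hHb _ m).trans (le_of_eq ?_)
    field_simp
  have hfx : f xb ≤ f γb + ∑ m, ν m * V * C₃ / (θ * R * T) := by
    have h1 := hflip γb (xb - γb) hγbbox (by
      intro m
      simpa using hxbbox m)
    rw [add_sub_cancel] at h1
    refine h1.trans (add_le_add_right (Finset.sum_le_sum fun m _ => ?_) _)
    refine (mul_le_mul_of_nonneg_left (hdiff m) (hν m)).trans (le_of_eq ?_)
    ring
  have hPsum : (∑ t ∈ Finset.range (R * T), P t) / (R * T)
      = (∑ τ ∈ Finset.range (R * T), y0hat (α τ) (ω τ)) / (R * T)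
        + (∑ t ∈ Finset.range (R * T), f (γ t)) / (R * T) := by
    simp only [hP]
    rw [Finset.sum_add_distrib, add_div]
  rw [← hxbd]
  linarith
end

section
/- The auxiliary-variable problem is equivalent to the original problem: the infimum of ȳ₀ + (1/t_end)Σ_{τ=0}^{t_end−1} f(γ(τ)) over all sequences (α(t),γ(t)) with α(t) ∈ A_{ω(t)}, γ(t) ∈ X, x_m^min ≤ γ_m(t) ≤ x_m^max, satisfying ȳ_l + (1/t_end)Σ_τ g_l(γ(τ)) ≤ 0 for all l ∈ {1,…,L}, ā_k ≤ b̄_k for all k, and γ̄_m = x̄_m for all m, is equal to the infimum of ȳ₀ + f(x̄) over all sequences α(t) ∈ A_{ω(t)} satisfying ȳ_l + g_l(x̄) ≤ 0 for all l ∈ {1,…,L}, ā_k ≤ b̄_k for all k, and x̄ ∈ X. -/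
theorem aux_sInf_eq (S T : Set ℝ) (h1 : T ⊆ S) (h2 : ∀ c ∈ S, ∃ d ∈ T, d ≤ c) :
    sInf S = sInf T := by
  have hlb : lowerBounds S = lowerBounds T := by
    ext b
    constructor
    · intro hb c hc
      exact hb (h1 hc)
    · intro hb c hc
      obtain ⟨d, hd, hdc⟩ := h2 c hc
      exact (hb hd).trans hdc
  by_cases hT : T.Nonempty
  · by_cases hB : BddBelow T
    · have g1 := isGLB_csInf hT hB
      have hB' : BddBelow S := by
        unfold BddBelow at *
        rwa [hlb]
      have g2 := isGLB_csInf (hT.mono h1) hB'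
      unfold IsGLB at g1 g2
      rw [hlb] at g2
      exact g2.unique g1
    · have hB' : ¬ BddBelow S := fun h => hB (h.mono h1)
      rw [Real.sInf_of_not_bddBelow hB, Real.sInf_of_not_bddBelow hB']
  · have hS : ¬ S.Nonempty := by
      rintro ⟨c, hc⟩
      obtain ⟨d, hd, _⟩ := h2 c hc
      exact hT ⟨d, hd⟩
    rw [Set.not_nonempty_iff_eq_empty] at hT hS
    rw [hT, hS]

theorem aux_avg {M : ℕ} (n : ℕ) (z : ℕ → Fin M → ℝ) :
    (∑ i ∈ Finset.range n, ((n : ℝ)⁻¹) • z i)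
      = fun m => (∑ i ∈ Finset.range n, z i m) / n := by
  ext m
  simp [Finset.sum_apply, Finset.mul_sum, div_eq_inv_mul]

theorem aux_w (n : ℕ) (hn : 0 < n) : ∑ _i ∈ Finset.range n, ((n : ℝ)⁻¹) = 1 := by
  have : (n : ℝ) ≠ 0 := by positivity
  simp [this]

theorem aux_mem {M : ℕ} (n : ℕ) (hn : 0 < n) (z : ℕ → Fin M → ℝ) (X : Set (Fin M → ℝ))
    (hX : Convex ℝ X) (hz : ∀ t < n, z t ∈ X) :
    (fun m => (∑ i ∈ Finset.range n, z i m) / n) ∈ X := by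
  rw [← aux_avg]
  exact hX.sum_mem (fun _ _ => by positivity) (aux_w n hn)
    (fun i hi => hz i (Finset.mem_range.1 hi))

theorem aux_jensen {M : ℕ} (n : ℕ) (hn : 0 < n) (z : ℕ → Fin M → ℝ) (X : Set (Fin M → ℝ))
    (f : (Fin M → ℝ) → ℝ) (hf : ConvexOn ℝ X f) (hz : ∀ t < n, z t ∈ X) :
    f (fun m => (∑ i ∈ Finset.range n, z i m) / n) ≤ (∑ i ∈ Finset.range n, f (z i)) / n := by
  rw [← aux_avg]
  refine (hf.map_sum_le (fun _ _ => by positivity) (aux_w n hn)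
    (fun i hi => hz i (Finset.mem_range.1 hi))).trans (le_of_eq ?_)
  simp [Finset.mul_sum, div_eq_inv_mul]

theorem aux_const (n : ℕ) (hn : 0 < n) (c : ℝ) : (∑ _i ∈ Finset.range n, c) / n = c := by
  have : (n : ℝ) ≠ 0 := by positivity
  simp [this]

/-- Equivalence of the auxiliary-variable transformed problem and the original problem:
the infimum of `ȳ₀ + (1/t_end)Σ_τ f(γ(τ))` over action/auxiliary sequences satisfying
`ȳ_l + (1/t_end)Σ_τ g_l(γ(τ)) ≤ 0`, `ā_k ≤ b̄_k`, and `γ̄ = x̄`, equals the infimum of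
`ȳ₀ + f(x̄)` over action sequences satisfying `ȳ_l + g_l(x̄) ≤ 0`, `ā_k ≤ b̄_k`,
and `x̄ ∈ X`. -/
theorem stmt_11
    {Ω Act : Type*} (ω : ℕ → Ω) (A : Ω → Set Act) (hAne : ∀ w, (A w).Nonempty)
    (K M L : ℕ) (hK : 0 < K) (hM : 0 < M) (hL : 0 < L)
    (ahat bhat : Fin K → Act → Ω → ℝ) (xhat : Fin M → Act → Ω → ℝ)
    (y0hat : Act → Ω → ℝ) (yhat : Fin L → Act → Ω → ℝ)
    (amax bmax : Fin K → ℝ) (xmin xmax : Fin M → ℝ)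
    (y0min y0max : ℝ) (ymin ymax : Fin L → ℝ)
    -- Assumption A1 (boundedness)
    (hA1a : ∀ (w : Ω) (a' : Act), a' ∈ A w → ∀ k, 0 ≤ ahat k a' w ∧ ahat k a' w ≤ amax k)
    (hA1b : ∀ (w : Ω) (a' : Act), a' ∈ A w → ∀ k, 0 ≤ bhat k a' w ∧ bhat k a' w ≤ bmax k)
    (hA1x : ∀ (w : Ω) (a' : Act), a' ∈ A w → ∀ m, xmin m ≤ xhat m a' w ∧ xhat m a' w ≤ xmax m)
    (hA1y0 : ∀ (w : Ω) (a' : Act), a' ∈ A w → y0min ≤ y0hat a' w ∧ y0hat a' w ≤ y0max)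
    (hA1y : ∀ (w : Ω) (a' : Act), a' ∈ A w → ∀ l, ymin l ≤ yhat l a' w ∧ yhat l a' w ≤ ymax l)
    -- the convex set X and the cost functions f, g_l on the box
    (X : Set (Fin M → ℝ)) (hX : Convex ℝ X)
    (f : (Fin M → ℝ) → ℝ) (g : Fin L → (Fin M → ℝ) → ℝ)
    (hfconv : ConvexOn ℝ {x : Fin M → ℝ | ∀ m, xmin m ≤ x m ∧ x m ≤ xmax m} f)
    (hfcont : ContinuousOn f {x : Fin M → ℝ | ∀ m, xmin m ≤ x m ∧ x m ≤ xmax m})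
    (hgconv : ∀ l, ConvexOn ℝ {x : Fin M → ℝ | ∀ m, xmin m ≤ x m ∧ x m ≤ xmax m} (g l))
    (hgcont : ∀ l, ContinuousOn (g l) {x : Fin M → ℝ | ∀ m, xmin m ≤ x m ∧ x m ≤ xmax m})
    (tend : ℕ) (htend : 0 < tend) :
    sInf {c : ℝ | ∃ (α : ℕ → Act) (γ : ℕ → Fin M → ℝ),
        (∀ t < tend, α t ∈ A (ω t)) ∧
        (∀ t < tend, γ t ∈ X) ∧
        (∀ t < tend, ∀ m, xmin m ≤ γ t m ∧ γ t m ≤ xmax m) ∧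
        (∀ l, (∑ τ ∈ Finset.range tend, yhat l (α τ) (ω τ)) / tend
            + (∑ τ ∈ Finset.range tend, g l (γ τ)) / tend ≤ 0) ∧
        (∀ k, (∑ τ ∈ Finset.range tend, ahat k (α τ) (ω τ)) / tend
            ≤ (∑ τ ∈ Finset.range tend, bhat k (α τ) (ω τ)) / tend) ∧
        (∀ m, (∑ τ ∈ Finset.range tend, γ τ m) / tend
            = (∑ τ ∈ Finset.range tend, xhat m (α τ) (ω τ)) / tend) ∧
        c = (∑ τ ∈ Finset.range tend, y0hat (α τ) (ω τ)) / tend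
            + (∑ τ ∈ Finset.range tend, f (γ τ)) / tend}
    = sInf {c : ℝ | ∃ α : ℕ → Act,
        (∀ t < tend, α t ∈ A (ω t)) ∧
        (∀ l, (∑ τ ∈ Finset.range tend, yhat l (α τ) (ω τ)) / tend
            + g l (fun m => (∑ τ ∈ Finset.range tend, xhat m (α τ) (ω τ)) / tend) ≤ 0) ∧
        (∀ k, (∑ τ ∈ Finset.range tend, ahat k (α τ) (ω τ)) / tend
            ≤ (∑ τ ∈ Finset.range tend, bhat k (α τ) (ω τ)) / tend) ∧
        (fun m => (∑ τ ∈ Finset.range tend, xhat m (α τ) (ω τ)) / tend) ∈ X ∧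
        c = (∑ τ ∈ Finset.range tend, y0hat (α τ) (ω τ)) / tend
            + f (fun m => (∑ τ ∈ Finset.range tend, xhat m (α τ) (ω τ)) / tend)} := by
  apply aux_sInf_eq
  · rintro c ⟨α, hα, hg, hab, hx, rfl⟩
    have hbox : ∀ m, xmin m ≤ (∑ τ ∈ Finset.range tend, xhat m (α τ) (ω τ)) / tend ∧
        (∑ τ ∈ Finset.range tend, xhat m (α τ) (ω τ)) / tend ≤ xmax m :=
      aux_mem tend htend (fun τ m => xhat m (α τ) (ω τ)) _ hfconv.1
        (fun t ht m => hA1x (ω t) (α t) (hα t ht) m)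
    refine ⟨α, fun _ m => (∑ τ ∈ Finset.range tend, xhat m (α τ) (ω τ)) / tend, hα,
      fun _ _ => hx, fun _ _ => hbox, ?_, hab, ?_, ?_⟩
    · intro l
      rw [aux_const tend htend]
      exact hg l
    · intro m
      rw [aux_const tend htend]
    · rw [aux_const tend htend]
  · rintro c ⟨α, γ, hα, hγX, hγ, hg, hab, hx, rfl⟩
    have hxe : (fun m => (∑ τ ∈ Finset.range tend, xhat m (α τ) (ω τ)) / (tend : ℝ))
        = fun m => (∑ τ ∈ Finset.range tend, γ τ m) / tend := funext fun m => (hx m).symm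
    refine ⟨_, ⟨α, hα, ?_, hab, ?_, rfl⟩, ?_⟩
    · intro l
      rw [hxe]
      have := aux_jensen tend htend γ _ (g l) (hgconv l) hγ
      linarith [hg l]
    · rw [hxe]
      exact aux_mem tend htend γ X hX hγX
    · rw [hxe]
      have := aux_jensen tend htend γ _ f hfconv hγ
      linarith
end

section
/- Let V ≥ 0, ν ≥ 0, A^max > 0, and let H(t), γ(t), x(t) be real sequences satisfying H(t+1) = H(t) + γ(t) − x(t), 0 ≤ x(t) ≤ A^max and 0 ≤ γ(t) ≤ A^max for all t, together with the selection rule: γ(t) = A^max whenever H(t) < 0, and γ(t) = 0 whenever H(t) > Vν. If −A^max ≤ H(0) ≤ Vν + A^max, then −A^max ≤ H(t) ≤ Vν + A^max for all t ∈ {0,1,2,…}. -/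
/-- Deterministic bound on the virtual queue `H(t)` in the flow-based internet model:
if the auxiliary variable selection rule chooses `γ(t) = A^max` whenever `H(t) < 0`
and `γ(t) = 0` whenever `H(t) > Vν`, then `H(t)` stays in `[-A^max, Vν + A^max]`. -/
theorem stmt_13 (V ν Amax : ℝ) (hV : 0 ≤ V) (hν : 0 ≤ ν) (hA : 0 < Amax)
    (H γ x : ℕ → ℝ)
    (hrec : ∀ t, H (t + 1) = H t + γ t - x t)
    (hx : ∀ t, 0 ≤ x t ∧ x t ≤ Amax)
    (hγ : ∀ t, 0 ≤ γ t ∧ γ t ≤ Amax)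
    (hsel1 : ∀ t, H t < 0 → γ t = Amax)
    (hsel2 : ∀ t, H t > V * ν → γ t = 0)
    (h0 : -Amax ≤ H 0 ∧ H 0 ≤ V * ν + Amax) :
    ∀ t, -Amax ≤ H t ∧ H t ≤ V * ν + Amax := by
  intro t
  induction t with
  | zero => exact h0
  | succ t ih =>
    obtain ⟨hx1, hx2⟩ := hx t
    obtain ⟨hg1, hg2⟩ := hγ t
    obtain ⟨ih1, ih2⟩ := ih
    rw [hrec t]
    constructor
    · rcases lt_or_ge (H t) 0 with h | h
      · have := hsel1 t h
        linarith
      · linarith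
    · rcases lt_or_ge (V * ν) (H t) with h | h
      · have := hsel2 t h
        linarith
      · linarith
end

section
/- Let V ≥ 0, ν^max ≥ 0, A^max > 0, and let M be a positive integer. Let Z(t), A(t), C(t) be real sequences with Z(t+1) = max[Z(t) + A(t) − C(t), 0], 0 ≤ A(t) ≤ M·A^max, C(t) ≥ 0 for all t, and suppose A(t) = 0 whenever Z(t) > Vν^max + A^max. If 0 ≤ Z(0) ≤ Vν^max + (M+1)A^max, then 0 ≤ Z(t) ≤ Vν^max + (M+1)A^max for all t ∈ {0,1,2,…}. -/
/-- Deterministic bound on the link virtual queue `Z_l(t)` in the flow-based internet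
model: arrivals `A(t) ≤ M·A^max` are admitted only when `Z(t) ≤ Vν^max + A^max`,
which keeps `Z(t)` in `[0, Vν^max + (M+1)A^max]`. -/
theorem stmt_15 (V νmax Amax : ℝ) (M : ℕ) (hV : 0 ≤ V) (hν : 0 ≤ νmax) (hA : 0 < Amax)
    (hM : 0 < M)
    (Z A C : ℕ → ℝ)
    (hrec : ∀ t, Z (t + 1) = max (Z t + A t - C t) 0)
    (hA' : ∀ t, 0 ≤ A t ∧ A t ≤ (M : ℝ) * Amax)
    (hC : ∀ t, 0 ≤ C t)
    (hsel : ∀ t, Z t > V * νmax + Amax → A t = 0)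
    (h0 : 0 ≤ Z 0 ∧ Z 0 ≤ V * νmax + ((M : ℝ) + 1) * Amax) :
    ∀ t, 0 ≤ Z t ∧ Z t ≤ V * νmax + ((M : ℝ) + 1) * Amax := by
  intro t
  induction t with
  | zero => exact h0
  | succ t ih =>
    rw [hrec t]
    refine ⟨le_max_right _ _, max_le ?_ (ih.1.trans ih.2)⟩
    have hc := hC t
    by_cases h : Z t > V * νmax + Amax
    · have h1 := hsel t h
      linarith [ih.2]
    · have h2 := (hA' t).2
      have h3 := not_lt.mp h
      linarith
end

section
/- Let Q^max > 0 and 0 < β ≤ Q^max, and let Q(t), a(t), b(t) be real sequences with Q(t+1) = max[Q(t) − b(t), 0] + a(t), 0 ≤ a(t) ≤ β, b(t) ≥ 0 for all t, and suppose a(t) = 0 whenever Q(t) > Q^max − β. If 0 ≤ Q(0) ≤ Q^max, then 0 ≤ Q(t) ≤ Q^max for all t ∈ {0,1,2,…}. -/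
/-- Bounded Queues Lemma (abstract form): for a queue `Q(t+1) = max[Q(t)-b(t),0] + a(t)`
whose per-slot arrivals satisfy `a(t) ≤ β` and are shut off (`a(t) = 0`) whenever
`Q(t) > Q^max - β`, the queue remains in `[0, Q^max]` for all time if initially so. -/
theorem stmt_16 (Qmax β : ℝ) (hQmax : 0 < Qmax) (hβ : 0 < β) (hβ' : β ≤ Qmax)
    (Q a b : ℕ → ℝ)
    (hrec : ∀ t, Q (t + 1) = max (Q t - b t) 0 + a t)
    (ha : ∀ t, 0 ≤ a t ∧ a t ≤ β)
    (hb : ∀ t, 0 ≤ b t)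
    (hsel : ∀ t, Q t > Qmax - β → a t = 0)
    (h0 : 0 ≤ Q 0 ∧ Q 0 ≤ Qmax) :
    ∀ t, 0 ≤ Q t ∧ Q t ≤ Qmax := by
  intro t
  induction t with
  | zero => exact h0
  | succ t ih =>
    obtain ⟨h1, h2⟩ := ih
    obtain ⟨a1, a2⟩ := ha t
    have hbt := hb t
    have hm0 : 0 ≤ max (Q t - b t) 0 := le_max_right _ _
    have hm : max (Q t - b t) 0 ≤ Q t := max_le (by linarith) h1
    rw [hrec t]
    refine ⟨by linarith, ?_⟩
    by_cases h : Q t > Qmax - β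
    · have := hsel t h
      linarith
    · have := not_lt.mp h
      linarith
end

section
/- Let 𝓘 be a nonempty set, let E be a finite index set, and let C_e : 𝓘 → ℝ (e ∈ E) be nonnegative functions with Σ_{e∈E} C_e(I) ≤ C_sum for all I ∈ 𝓘. Let W_e ≥ 0 and Ŵ_e ≥ 0 (e ∈ E) be weights with |W_e − Ŵ_e| ≤ K for all e ∈ E, where K ≥ 0. If Î ∈ 𝓘 attains the supremum of Σ_{e∈E} C_e(I)Ŵ_e over I ∈ 𝓘, then Σ_{e∈E} C_e(Î)W_e ≥ sup_{I∈𝓘} Σ_{e∈E} C_e(I)W_e − 2C_sum·K. -/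
/-- Abstract core of the `C`-approximation lemma for max-weight scheduling with
perturbed weights: if `Î` maximizes the perturbed-weight objective `Σ_e C_e(I)Ŵ_e`,
and the true and perturbed weights differ entrywise by at most `K`, then the
true-weight objective at `Î` is within `2·C_sum·K` of its supremum. -/
theorem stmt_17 {I E : Type*} [Nonempty I] [Fintype E]
    (C : E → I → ℝ) (Csum : ℝ)
    (hC : ∀ e i, 0 ≤ C e i)
    (hCsum : ∀ i, ∑ e, C e i ≤ Csum)
    (W Wh : E → ℝ) (K : ℝ) (hK : 0 ≤ K)
    (hW : ∀ e, 0 ≤ W e) (hWh : ∀ e, 0 ≤ Wh e)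
    (hclose : ∀ e, |W e - Wh e| ≤ K)
    (Ihat : I)
    (hIhat : ∀ i, ∑ e, C e i * Wh e ≤ ∑ e, C e Ihat * Wh e) :
    ∑ e, C e Ihat * W e ≥ sSup (Set.range fun i => ∑ e, C e i * W e) - 2 * Csum * K := by
  have key : ∀ i, |∑ e, C e i * W e - ∑ e, C e i * Wh e| ≤ Csum * K := by
    intro i
    rw [← Finset.sum_sub_distrib]
    calc |∑ e, (C e i * W e - C e i * Wh e)|
        ≤ ∑ e, |C e i * W e - C e i * Wh e| := Finset.abs_sum_le_sum_abs _ _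
      _ ≤ ∑ e, C e i * K := by
          apply Finset.sum_le_sum
          intro e _
          rw [← mul_sub, abs_mul, abs_of_nonneg (hC e i)]
          exact mul_le_mul_of_nonneg_left (hclose e) (hC e i)
      _ = (∑ e, C e i) * K := by rw [Finset.sum_mul]
      _ ≤ Csum * K := mul_le_mul_of_nonneg_right (hCsum i) hK
  have hsup : sSup (Set.range fun i => ∑ e, C e i * W e)
      ≤ ∑ e, C e Ihat * W e + 2 * Csum * K := by
    apply csSup_le (Set.range_nonempty _)
    rintro _ ⟨i, rfl⟩
    have h1 := abs_le.mp (key i)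
    have h2 := abs_le.mp (key Ihat)
    have h3 := hIhat i
    show ∑ e, C e i * W e ≤ _
    linarith [h1.2, h2.1]
  linarith
end
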